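/- arXiv:2210.02716 — 3 statements merged into one kernel-verified Lean document; each statement's English description precedes it below -/
import Mathlib

section
/- Every continuous group homomorphism χ : ℂˣ → ℂˣ is of the form χ(z) = (z/|z|)^k · |z|^s for some k ∈ ℤ and s ∈ ℂ (and this pair (k, s) is unique). -/
/-!
Along each line `t ↦ exp (t v)` a continuous character of `ℂˣ` is a continuous one-parameter group.
Such a group `ψ` is differentiable: `ψ x * ∫₀ᶜ ψ` equals `∫ₓˣ⁺ᶜ ψ`, which is differentiable in `x`,
and `∫₀ᶜ ψ ≈ c` is invertible for small `c`. Hence `ψ` solves `ψ' = ψ a` and is `t ↦ exp (t a)`.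
The line `v = 1` gives the exponent `s`; the line `v = I` has period `2π`, which forces `a = k I`
with `k` an integer. Since `exp` maps `ℂ` onto `ℂˣ`, these two lines determine the character.
-/

open Filter Topology

section OneParameterGroups

variable {𝔸 : Type*} [NormedRing 𝔸] [NormedAlgebra ℝ 𝔸]

theorem hasDerivAt_addChar {ψ : AddChar ℝ 𝔸} (hψ : DifferentiableAt ℝ ψ 0) (x : ℝ) :
    HasDerivAt ψ (ψ x * deriv ψ 0) x := by
  have hshift : HasDerivAt (fun y => ψ (y - x)) (deriv ψ 0) x :=
    HasDerivAt.comp_sub_const x x (by simpa using hψ.hasDerivAt)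
  simpa [← AddChar.map_add_eq_mul] using hshift.const_mul (ψ x)

variable [CompleteSpace 𝔸]

theorem exists_isUnit_intervalIntegral {f : ℝ → 𝔸} (hf : Continuous f) {x : ℝ}
    (hx : IsUnit (f x)) : ∃ y, IsUnit (∫ t in x..y, f t) := by
  have hderiv : HasDerivAt (fun y => ∫ t in x..y, f t) (f x) x :=
    (hf.integral_hasStrictDerivAt x x).hasDerivAt
  have hslope : ∀ᶠ y in 𝓝[≠] x, IsUnit (slope (fun y => ∫ t in x..y, f t) x y) :=
    hderiv.tendsto_slope.eventually (Units.isOpen.mem_nhds hx)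
  obtain ⟨y, hunit, hne⟩ := (hslope.and self_mem_nhdsWithin).exists
  refine ⟨y, ?_⟩
  simpa [slope_def_module, sub_ne_zero.mpr hne] using
    hunit.smul (Units.mk0 (y - x) (sub_ne_zero.mpr hne))

theorem addChar_mul_intervalIntegral (ψ : AddChar ℝ 𝔸) (hψ : Continuous ψ) (x c : ℝ) :
    ψ x * ∫ t in 0..c, ψ t = (∫ t in 0..x + c, ψ t) - ∫ t in 0..x, ψ t :=
  calc ψ x * ∫ t in 0..c, ψ t = ∫ t in 0..c, ψ (x + t) := by
        simp only [AddChar.map_add_eq_mul]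
        exact ((ContinuousLinearMap.mul ℝ 𝔸 (ψ x)).intervalIntegral_comp_comm
          (hψ.intervalIntegrable 0 c)).symm
    _ = ∫ t in x..x + c, ψ t := by simp
    _ = _ := (intervalIntegral.integral_interval_sub_left (hψ.intervalIntegrable _ _)
        (hψ.intervalIntegrable _ _)).symm

theorem differentiable_addChar_of_continuous (ψ : AddChar ℝ 𝔸) (hψ : Continuous ψ) :
    Differentiable ℝ ψ := by
  obtain ⟨c, u, hu⟩ := exists_isUnit_intervalIntegral hψ (x := 0) (by simp)
  have hprim : Differentiable ℝ fun x => ∫ t in 0..x, ψ t := fun x =>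
    (hψ.integral_hasStrictDerivAt 0 x).hasDerivAt.differentiableAt
  have hψ_eq : ⇑ψ = fun x => ((∫ t in 0..x + c, ψ t) - ∫ t in 0..x, ψ t) * (u⁻¹ : 𝔸ˣ) := by
    ext x
    rw [Units.eq_mul_inv_iff_mul_eq, hu, addChar_mul_intervalIntegral ψ hψ]
  rw [hψ_eq]
  exact ((hprim.comp (differentiable_id.add_const c)).sub hprim).mul_const _

theorem addChar_eq_exp_smul_deriv (ψ : AddChar ℝ 𝔸) (hψ : Continuous ψ) (t : ℝ) :
    ψ t = NormedSpace.exp (t • deriv ψ 0) := by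
  set a := deriv ψ 0
  have hconst (x : ℝ) : HasDerivAt (fun y => ψ y * NormedSpace.exp (y • -a)) 0 x := by
    have hψ' := hasDerivAt_addChar (differentiable_addChar_of_continuous ψ hψ 0) x
    convert! hψ'.mul (hasDerivAt_exp_smul_const' (-a) x) using 1
    noncomm_ring
  have hone : ψ t * NormedSpace.exp (t • -a) = 1 := by
    simpa using is_const_of_deriv_eq_zero (fun x => (hconst x).differentiableAt)
      (fun x => (hconst x).deriv) t 0
  let : NormedAlgebra ℚ 𝔸 := .restrictScalars ℚ ℝ 𝔸
  calc ψ t = ψ t * (NormedSpace.exp (t • -a) * NormedSpace.exp (t • a)) := by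
        rw [← NormedSpace.exp_add_of_commute] <;> simp
    _ = NormedSpace.exp (t • a) := by rw [← mul_assoc, hone, one_mul]

theorem exp_smul_injective :
    Function.Injective fun (a : 𝔸) (t : ℝ) => NormedSpace.exp (t • a) := by
  intro a b (hab : (fun t : ℝ => NormedSpace.exp (t • a)) = fun t => NormedSpace.exp (t • b))
  have hderiv (c : 𝔸) : HasDerivAt (fun t : ℝ => NormedSpace.exp (t • c)) c 0 := by
    simpa using hasDerivAt_exp_smul_const c (0 : ℝ)
  exact (hderiv a).unique (hab ▸ hderiv b)

end OneParameterGroups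

section ComplexCharacters

open Complex

theorem exists_forall_addChar_eq_exp_mul (ψ : AddChar ℝ ℂ) (hψ : Continuous ψ) :
    ∃ a : ℂ, ∀ t : ℝ, ψ t = exp (a * t) :=
  ⟨deriv ψ 0, fun t => by
    rw [addChar_eq_exp_smul_deriv ψ hψ, ← exp_eq_exp_ℂ, real_smul, mul_comm]⟩

theorem exists_int_forall_addChar_eq_exp_of_map_eq_one (ψ : AddChar ℝ ℂ) (hψ : Continuous ψ) {T : ℝ}
    (hT : T ≠ 0) (hψT : ψ T = 1) :
    ∃ n : ℤ, ∀ t : ℝ, ψ t = exp (2 * Real.pi * n / T * I * t) := by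
  obtain ⟨a, ha⟩ := exists_forall_addChar_eq_exp_mul ψ hψ
  obtain ⟨n, hn⟩ := exp_eq_one_iff.mp ((ha T).symm.trans hψT)
  refine ⟨n, fun t => ?_⟩
  have ha_eq : a = 2 * Real.pi * n / T * I := by
    rw [eq_div_of_mul_eq (ofReal_ne_zero.mpr hT) hn]
    ring
  rw [ha, ha_eq]

theorem eq_of_forall_exp_mul_eq {a b : ℂ} (h : ∀ t : ℝ, exp (a * t) = exp (b * t)) : a = b :=
  exp_smul_injective <| funext fun t => by
    simpa only [← exp_eq_exp_ℂ, real_smul, mul_comm] using h t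

/-- The exponential `ℂ → ℂˣ`, as an additive character with values in the group of units. -/
noncomputable def cexpUnits : AddChar ℂ ℂˣ :=
  AddChar.toMonoidHomEquiv.symm expMonoidHom.toHomUnits

@[simp]
theorem coe_cexpUnits (w : ℂ) : (cexpUnits w : ℂ) = exp w :=
  rfl

theorem continuous_cexpUnits : Continuous cexpUnits :=
  Units.isEmbedding_val₀.continuous_iff.mpr continuous_exp

theorem cexpUnits_surjective : Function.Surjective cexpUnits := fun z =>
  ⟨log z, Units.ext (exp_log z.ne_zero)⟩

/-- The restriction `t ↦ χ (exp (t v))` of a character `χ` of `ℂˣ` to the one-parameter subgroup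
of `ℂˣ` with direction `v`. -/
noncomputable def lineChar {M : Type*} [Monoid M] (χ : ℂˣ →* M) (v : ℂ) : AddChar ℝ M :=
  (χ.compAddChar cexpUnits).compAddMonoidHom (LinearMap.toSpanSingleton ℝ ℂ v).toAddMonoidHom

theorem lineChar_apply {M : Type*} [Monoid M] (χ : ℂˣ →* M) (v : ℂ) (t : ℝ) :
    lineChar χ v t = χ (cexpUnits (t • v)) :=
  rfl

theorem continuous_lineChar {M : Type*} [Monoid M] [TopologicalSpace M] {χ : ℂˣ →* M}
    (hχ : Continuous χ) (v : ℂ) : Continuous (lineChar χ v) :=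
  hχ.comp (continuous_cexpUnits.comp (continuous_id.smul continuous_const))

theorem lineChar_one_mul_lineChar_I {M : Type*} [Monoid M] (χ : ℂˣ →* M) (w : ℂ) :
    lineChar χ 1 w.re * lineChar χ I w.im = χ (cexpUnits w) := by
  simp only [lineChar_apply, ← map_mul, ← AddChar.map_add_eq_mul, real_smul, mul_one, re_add_im]

theorem lineChar_I_two_pi {M : Type*} [Monoid M] (χ : ℂˣ →* M) :
    lineChar χ I (2 * Real.pi) = 1 := by
  have hexp : cexpUnits ((2 * Real.pi : ℝ) • I) = 1 := by
    ext
    simp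
  rw [lineChar_apply, hexp, map_one]

/-- The quasi-character `z ↦ (z / |z|) ^ k * |z| ^ s` of `ℂˣ`, where `|z| ^ s` is written as
`exp (s * log |z|)`. -/
noncomputable def quasiChar (k : ℤ) (s : ℂ) : ℂˣ →* ℂ where
  toFun z := ((z : ℂ) / ‖(z : ℂ)‖) ^ k * exp (s * Real.log ‖(z : ℂ)‖)
  map_one' := by simp
  map_mul' z w := by
    rw [Units.val_mul, norm_mul, Real.log_mul (by simp) (by simp), ofReal_mul, ofReal_add,
      mul_div_mul_comm, mul_zpow, mul_add, exp_add, mul_mul_mul_comm]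

theorem quasiChar_cexpUnits (k : ℤ) (s w : ℂ) :
    quasiChar k s (cexpUnits w) = exp (s * w.re) * exp (k * I * w.im) := by
  have hangle : exp w / ‖exp w‖ = exp (w.im * I) := by
    rw [norm_exp, ofReal_exp, ← exp_sub]
    congr 1
    linear_combination -re_add_im w
  calc quasiChar k s (cexpUnits w) = (exp w / ‖exp w‖) ^ k * exp (s * Real.log ‖exp w‖) := rfl
    _ = exp (k * (w.im * I)) * exp (s * w.re) := by
        rw [hangle, norm_exp, Real.log_exp, exp_int_mul]
    _ = _ := by ring_nf

theorem quasiChar_injective : Function.Injective fun ks : ℤ × ℂ => quasiChar ks.1 ks.2 := by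
  rintro ⟨k, s⟩ ⟨l, r⟩ (h : quasiChar k s = quasiChar l r)
  have hs : s = r := eq_of_forall_exp_mul_eq fun t => by
    simpa [quasiChar_cexpUnits] using DFunLike.congr_fun h (cexpUnits t)
  have hk : (k : ℂ) * I = l * I := eq_of_forall_exp_mul_eq fun t => by
    simpa [quasiChar_cexpUnits] using DFunLike.congr_fun h (cexpUnits (t * I))
  exact Prod.ext (Int.cast_injective (mul_right_cancel₀ I_ne_zero hk)) hs

theorem exists_eq_quasiChar {χ : ℂˣ →* ℂ} (hχ : Continuous χ) :
    ∃ (k : ℤ) (s : ℂ), χ = quasiChar k s := by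
  obtain ⟨s, hs⟩ := exists_forall_addChar_eq_exp_mul _ (continuous_lineChar hχ 1)
  obtain ⟨k, hk⟩ := exists_int_forall_addChar_eq_exp_of_map_eq_one _ (continuous_lineChar hχ I)
    Real.two_pi_pos.ne' (lineChar_I_two_pi χ)
  have hperiod : 2 * Real.pi * k / (2 * Real.pi : ℝ) = (k : ℂ) := by
    have := Real.pi_ne_zero
    push_cast
    field_simp
  refine ⟨k, s, MonoidHom.ext <| cexpUnits_surjective.forall.mpr fun w => ?_⟩
  rw [← lineChar_one_mul_lineChar_I, hs, hk, hperiod, quasiChar_cexpUnits]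

end ComplexCharacters

/-- Every continuous group homomorphism `χ : ℂˣ → ℂˣ` is of the form
`χ(z) = (z/|z|)^k ⬝ |z|^s` for a unique pair `(k, s) ∈ ℤ × ℂ`,
where `|z|^s := exp (s * log |z|)`. -/
theorem quasi_char_complex_classification (χ : ℂˣ →* ℂˣ)
    (hχ : Continuous fun z : ℂˣ => (χ z : ℂ)) :
    ∃! ks : ℤ × ℂ, ∀ z : ℂˣ,
      (χ z : ℂ) = ((z : ℂ) / ‖(z : ℂ)‖) ^ ks.1 *
        Complex.exp (ks.2 * Real.log ‖(z : ℂ)‖) := by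
  obtain ⟨k, s, hks⟩ := exists_eq_quasiChar (χ := (Units.coeHom ℂ).comp χ) hχ
  refine ⟨(k, s), DFunLike.congr_fun hks, fun ls hls => quasiChar_injective ?_⟩
  exact (MonoidHom.ext hls : (Units.coeHom ℂ).comp χ = quasiChar ls.1 ls.2).symm.trans hks
end

section
/- Let p, q ∈ ℤ, k ∈ ℤ, φ ∈ ℝ and w ∈ ℝ. Then (z/|z|)^k · |z|^{2iφ − w} = z^{−p} · conj(z)^{−q} holds for every z ∈ ℂˣ if and only if k = q − p, φ = 0 and w = p + q (in particular w ∈ ℤ). (Characterization of algebraic infinity-type at a complex place.) -/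
/-! Every `z ≠ 0` is `exp u`, and there the quasicharacter `(z / |z|) ^ k * |z| ^ s` takes the value
`exp (s * u.re + k * u.im * I)`. Along the positive reals and along the unit circle it is thus a
one-parameter group with generator `s`, resp. `k * I`, so it determines `(k, s)`. Since
`z ^ m * conj z ^ n` is the quasicharacter with parameters `(m - n, m + n)`, the theorem amounts to
comparing parameters. -/

open Complex ComplexConjugate

theorem exp_smul_injective_s4 {A : Type*} [NormedRing A] [NormedAlgebra ℝ A] [CompleteSpace A] :
    Function.Injective fun (a : A) (t : ℝ) ↦ NormedSpace.exp (t • a) := by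
  intro a b hab
  have hasDerivAt_zero (c : A) : HasDerivAt (fun t : ℝ ↦ NormedSpace.exp (t • c)) c 0 := by
    simpa using hasDerivAt_exp_smul_const (𝕂 := ℝ) c 0
  exact (hasDerivAt_zero a).unique ((hasDerivAt_zero b).congr_of_eventuallyEq (.of_eq hab))

/-- The quasicharacter `z ↦ (z / |z|) ^ k * |z| ^ s` of `ℂˣ`, with `|z| ^ s` written as
`exp (s * log |z|)`. It is defined on all of `ℂ` so as to accept `exp u` directly; its value at `0`
is meaningless. -/
noncomputable def complexQuasichar (k : ℤ) (s z : ℂ) : ℂ :=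
  (z / ‖z‖) ^ k * exp (s * Real.log ‖z‖)

theorem complexQuasichar_exp (k : ℤ) (s u : ℂ) :
    complexQuasichar k s (exp u) = exp (s * u.re + k * (u.im * I)) := by
  have exp_div_norm : exp u / ‖exp u‖ = exp (u.im * I) := by
    rw [norm_exp, ofReal_exp, ← exp_sub]
    congr 1
    linear_combination -u.re_add_im
  rw [complexQuasichar, exp_div_norm, norm_exp, Real.log_exp, ← exp_int_mul, ← exp_add, add_comm]

theorem zpow_mul_conj_zpow_eq_complexQuasichar {z : ℂ} (hz : z ≠ 0) (m n : ℤ) :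
    z ^ m * conj z ^ n = complexQuasichar (m - n) (m + n) z := by
  obtain ⟨u, rfl⟩ : ∃ u, exp u = z := ⟨log z, exp_log hz⟩
  have conj_eq : conj u = u.re - u.im * I := by simp [Complex.ext_iff]
  rw [complexQuasichar_exp, ← exp_conj, ← exp_int_mul, ← exp_int_mul, ← exp_add, conj_eq]
  congr 1
  push_cast
  linear_combination -m * u.re_add_im

theorem complexQuasichar_eq_iff {k l : ℤ} {s t : ℂ} :
    (∀ z : ℂˣ, complexQuasichar k s z = complexQuasichar l t z) ↔ k = l ∧ s = t := by
  refine ⟨fun h ↦ ?_, by rintro ⟨rfl, rfl⟩ z; rfl⟩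
  have exp_eq (u : ℂ) : exp (s * u.re + k * (u.im * I)) = exp (t * u.re + l * (u.im * I)) := by
    simpa only [Units.val_mk0, complexQuasichar_exp] using h (Units.mk0 (exp u) (exp_ne_zero u))
  have angular : (k : ℂ) * I = l * I := exp_smul_injective_s4 <| funext fun θ ↦ by
    simpa [← exp_eq_exp_ℂ, mul_left_comm] using exp_eq (θ * I)
  have radial : s = t := exp_smul_injective_s4 <| funext fun r ↦ by
    simpa [← exp_eq_exp_ℂ, mul_comm] using exp_eq r
  exact ⟨by exact_mod_cast mul_right_cancel₀ I_ne_zero angular, radial⟩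

/-- Characterization of algebraic infinity-type at a complex place.
Let `p, q, k ∈ ℤ` and `φ, w ∈ ℝ`. Then
`(z/|z|)^k ⬝ |z|^{2iφ − w} = z^{−p} ⬝ conj(z)^{−q}` for every `z ∈ ℂˣ`
if and only if `k = q − p`, `φ = 0` and `w = p + q`
(in particular `w ∈ ℤ`). Here `|z|^s := exp (s * log |z|)`. -/
theorem algebraic_infinity_type_iff (p q k : ℤ) (φ w : ℝ) :
    (∀ z : ℂˣ,
      ((z : ℂ) / ‖(z : ℂ)‖) ^ k *
        Complex.exp ((2 * Complex.I * (φ : ℂ) - (w : ℂ)) *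
          Real.log ‖(z : ℂ)‖) =
      (z : ℂ) ^ (-p) * (starRingEnd ℂ (z : ℂ)) ^ (-q)) ↔
    (k = q - p ∧ φ = 0 ∧ (w : ℝ) = (p : ℝ) + (q : ℝ)) := by
  have exponent_eq_iff :
      2 * I * φ - w = ((-p : ℤ) : ℂ) + ((-q : ℤ) : ℂ) ↔ -w = -p + -q ∧ φ = 0 := by
    simp [Complex.ext_iff]
  change (∀ z : ℂˣ, complexQuasichar k (2 * I * φ - w) z = (z : ℂ) ^ (-p) * conj (z : ℂ) ^ (-q)) ↔ _
  simp_rw [zpow_mul_conj_zpow_eq_complexQuasichar (Units.ne_zero _)]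
  rw [complexQuasichar_eq_iff, neg_sub_neg, exponent_eq_iff]
  grind
end

section
/- Let F be a number field. Then F admits a CM subfield if and only if F⁻ ≠ {0}, and this holds if and only if dim_ℚ F⁺ = dim_ℚ F⁻. -/
/-- The set `F⁺` of elements of `F` all of whose complex embeddings are real,
as a `ℚ`-subspace of `F`. -/
def Fplus (F : Type*) [Field F] [NumberField F] : Submodule ℚ F where
  carrier := {x | ∀ σ : F →+* ℂ, σ x = starRingEnd ℂ (σ x)}
  add_mem' := by
    intro a b ha hb σ
    simp only [map_add]
    linear_combination ha σ + hb σ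
  zero_mem' := by intro σ; simp
  smul_mem' := by
    intro q x hx σ
    simp only [Rat.smul_def, map_mul, map_ratCast]
    linear_combination (q : ℂ) * hx σ

/-- The set `F⁻` of elements of `F` all of whose complex embeddings are purely
imaginary, as a `ℚ`-subspace of `F`. -/
def Fminus (F : Type*) [Field F] [NumberField F] : Submodule ℚ F where
  carrier := {x | ∀ σ : F →+* ℂ, σ x = - starRingEnd ℂ (σ x)}
  add_mem' := by
    intro a b ha hb σ
    simp only [map_add]
    linear_combination ha σ + hb σ
  zero_mem' := by intro σ; simp
  smul_mem' := by
    intro q x hx σ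
    simp only [Rat.smul_def, map_mul, map_ratCast]
    linear_combination (q : ℂ) * hx σ

/-- A field is totally real if every ring embedding into `ℂ` has image
contained in `ℝ`. -/
def IsTotallyRealField (K : Type*) [Field K] : Prop :=
  ∀ (σ : K →+* ℂ) (x : K), (σ x).im = 0

/-- A field is CM if no ring embedding into `ℂ` has image contained in `ℝ`,
and it is a degree-2 extension of a totally real subfield. -/
def IsCMField (K : Type*) [Field K] : Prop :=
  (∀ σ : K →+* ℂ, ∃ x : K, (σ x).im ≠ 0) ∧
  ∃ k : Subfield K, IsTotallyRealField k ∧ Module.finrank k K = 2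

/-!
If `y ∈ F⁻` is nonzero, then multiplication by `y` identifies `F⁺` with `F⁻`. Moreover
`y ^ 2 ∈ F⁺` while no embedding sends `y` into `ℝ`, so `F⁺(y)` is a totally complex quadratic
extension of the totally real field `F⁺`. Conversely, the complex conjugation of a CM subfield `K`
is an automorphism `c ≠ 1` that every embedding of `K` carries to conjugation on `ℂ`, and if
`c x ≠ x`, then `c x - x` is a nonzero element of `F⁻`. Finally `F⁻ = 0` rules out equal
dimensions because `1 ∈ F⁺`.
-/

open NumberField (IsTotallyReal IsTotallyComplex maximalRealSubfield)
open scoped IntermediateField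

section EmbeddingCriteria

variable {K : Type*} [Field K]

theorem complexEmbedding_isReal_iff_forall_im_eq_zero (φ : K →+* ℂ) :
    NumberField.ComplexEmbedding.IsReal φ ↔ ∀ x, (φ x).im = 0 := by
  simp only [NumberField.ComplexEmbedding.isReal_iff, RingHom.ext_iff,
    NumberField.ComplexEmbedding.conjugate_coe_eq, Complex.conj_eq_iff_im]

theorem isTotallyRealField_iff_isTotallyReal :
    IsTotallyRealField K ↔ IsTotallyReal K := by
  refine ⟨fun h ↦ ⟨fun v ↦ ?_⟩, fun _ φ ↦ ?_⟩
  · exact NumberField.InfinitePlace.isReal_iff.mpr <|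
      (complexEmbedding_isReal_iff_forall_im_eq_zero _).mpr (h v.embedding)
  · exact (complexEmbedding_isReal_iff_forall_im_eq_zero φ).mp
      (IsTotallyReal.complexEmbedding_isReal φ)

theorem isTotallyComplex_iff_forall_exists_im_ne_zero :
    IsTotallyComplex K ↔ ∀ φ : K →+* ℂ, ∃ x, (φ x).im ≠ 0 := by
  simp_rw [← not_forall, ← complexEmbedding_isReal_iff_forall_im_eq_zero]
  refine ⟨fun _ φ ↦ IsTotallyComplex.complexEmbedding_not_isReal φ, fun h ↦ ⟨fun v ↦ ?_⟩⟩
  exact NumberField.InfinitePlace.isComplex_iff.mpr (h v.embedding)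

theorem isCMField_iff_numberField_isCMField [CharZero K] [Algebra.IsAlgebraic ℚ K] :
    IsCMField K ↔ NumberField.IsCMField K := by
  constructor
  · rintro ⟨hK, k, hk, hkK⟩
    have := isTotallyComplex_iff_forall_exists_im_ne_zero.mpr hK
    have := isTotallyRealField_iff_isTotallyReal.mp hk
    have : Algebra.IsQuadraticExtension k K := ⟨hkK⟩
    exact .ofCMExtension k K
  · intro _
    exact ⟨isTotallyComplex_iff_forall_exists_im_ne_zero.mp inferInstance, maximalRealSubfield K,
      isTotallyRealField_iff_isTotallyReal.mpr inferInstance,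
      Algebra.IsQuadraticExtension.finrank_eq_two _ _⟩

end EmbeddingCriteria

open Polynomial in
theorem isQuadraticExtension_adjoin_simple {k L : Type*} [Field k] [Field L] [Algebra k L] {y : L}
    (hy : y ∉ Set.range (algebraMap k L)) (hy2 : y ^ 2 ∈ Set.range (algebraMap k L)) :
    Algebra.IsQuadraticExtension k k⟮y⟯ := by
  obtain ⟨a, ha⟩ := hy2
  have hroot : aeval y (X ^ 2 - C a) = 0 := by simp [ha]
  have hmonic : (X ^ 2 - C a).Monic := monic_X_pow_sub_C a two_ne_zero
  have hint : IsIntegral k y := ⟨_, hmonic, hroot⟩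
  refine ⟨?_⟩
  rw [IntermediateField.adjoin.finrank hint]
  apply le_antisymm
  · simpa using natDegree_le_of_dvd (minpoly.dvd k y hroot) hmonic.ne_zero
  · exact (minpoly.two_le_natDegree_iff hint).mpr hy

/-- The elements of a field all of whose complex embeddings are purely imaginary. For a number field
`F` this is `F⁻`, here regarded as a vector space over `F⁺`, the maximal real subfield: it is at
most one-dimensional over that field. -/
def totallyImaginarySubspace (F : Type*) [Field F] : Submodule (maximalRealSubfield F) F where
  carrier := {x | ∀ φ : F →+* ℂ, star (φ x) = -φ x}
  add_mem' hx hy φ := by rw [map_add, star_add, hx, hy, neg_add]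
  zero_mem' := by simp
  smul_mem' c x hx φ := by
    rw [Subfield.smul_def, smul_eq_mul, map_mul, star_mul', c.2 φ, hx φ, mul_neg]

section TotallyImaginary

variable {F : Type*} [Field F] {x y : F}

theorem div_mem_maximalRealSubfield (hx : x ∈ totallyImaginarySubspace F)
    (hy : y ∈ totallyImaginarySubspace F) : x / y ∈ maximalRealSubfield F := fun φ ↦ by
  rw [map_div₀, star_div₀, hx φ, hy φ, neg_div_neg_eq]

theorem sq_mem_maximalRealSubfield (hy : y ∈ totallyImaginarySubspace F) :
    y ^ 2 ∈ maximalRealSubfield F := fun φ ↦ by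
  rw [map_pow, star_pow, hy φ, neg_sq]

theorem totallyImaginarySubspace_eq_span_singleton (hy : y ∈ totallyImaginarySubspace F)
    (hy0 : y ≠ 0) :
    totallyImaginarySubspace F = Submodule.span (maximalRealSubfield F) {y} := by
  refine le_antisymm (fun x hx ↦ Submodule.mem_span_singleton.mpr ?_) (by simpa using hy)
  exact ⟨⟨x / y, div_mem_maximalRealSubfield hx hy⟩, div_mul_cancel₀ x hy0⟩

theorem im_ne_zero_of_mem_totallyImaginarySubspace (hy : y ∈ totallyImaginarySubspace F)
    (hy0 : y ≠ 0) (φ : F →+* ℂ) : (φ y).im ≠ 0 := by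
  intro him
  have hreal : star (φ y) = φ y := Complex.conj_eq_iff_im.mpr him
  exact hy0 <| (map_eq_zero φ).mp <| self_eq_neg.mp (hreal.symm.trans (hy φ))

theorem isTotallyComplex_of_mem_totallyImaginarySubspace (hy : y ∈ totallyImaginarySubspace F)
    (hy0 : y ≠ 0) : IsTotallyComplex F :=
  isTotallyComplex_iff_forall_exists_im_ne_zero.mpr fun φ ↦
    ⟨y, im_ne_zero_of_mem_totallyImaginarySubspace hy hy0 φ⟩

theorem algebraMap_mem_totallyImaginarySubspace_iff {K : Type*} [Field K] [Algebra K F]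
    [Algebra.IsAlgebraic K F] {x : K} :
    algebraMap K F x ∈ totallyImaginarySubspace F ↔ x ∈ totallyImaginarySubspace K := by
  refine ⟨fun hx φ ↦ ?_, fun hx φ ↦ hx (φ.comp (algebraMap K F))⟩
  simpa only [NumberField.ComplexEmbedding.lift_algebraMap_apply] using
    hx (NumberField.ComplexEmbedding.lift F φ)

variable (F) in
theorem totallyImaginarySubspace_ne_bot_iff_rank_eq [CharZero F] :
    totallyImaginarySubspace F ≠ ⊥ ↔
      Module.rank ℚ (maximalRealSubfield F) = Module.rank ℚ (totallyImaginarySubspace F) := by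
  constructor
  · intro h
    obtain ⟨y, hy, hy0⟩ := Submodule.exists_mem_ne_zero_of_ne_bot h
    rw [totallyImaginarySubspace_eq_span_singleton hy hy0]
    exact ((LinearEquiv.toSpanNonzeroSingleton _ F y hy0).restrictScalars ℚ).rank_eq
  · intro h hbot
    have hrank : Module.rank ℚ (⊥ : Submodule (maximalRealSubfield F) F) = 0 :=
      rank_subsingleton' ℚ _
    rw [hbot, hrank] at h
    exact rank_pos.ne' h

variable [CharZero F] [Algebra.IsAlgebraic ℚ F]

variable (F) in
theorem totallyImaginarySubspace_ne_bot_of_isCMField [NumberField.IsCMField F] :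
    totallyImaginarySubspace F ≠ ⊥ := by
  obtain ⟨x, hx⟩ := DFunLike.ne_iff.mp (NumberField.IsCMField.complexConj_ne_one F)
  refine (Submodule.ne_bot_iff _).mpr
    ⟨NumberField.IsCMField.complexConj F x - x, fun φ ↦ ?_, sub_ne_zero.mpr hx⟩
  simp

theorem isCMField_adjoin_simple (hy : y ∈ totallyImaginarySubspace F) (hy0 : y ≠ 0) :
    IsCMField (maximalRealSubfield F)⟮y⟯ := by
  have : Algebra.IsAlgebraic ℚ (maximalRealSubfield F)⟮y⟯ := .tower_bot ℚ _ F
  have : Algebra.IsAlgebraic (maximalRealSubfield F) F := .tower_top (K := ℚ) _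
  have : IsTotallyComplex (maximalRealSubfield F)⟮y⟯ := by
    refine isTotallyComplex_of_mem_totallyImaginarySubspace
      (y := IntermediateField.AdjoinSimple.gen _ y) ?_ ?_
    · rwa [← algebraMap_mem_totallyImaginarySubspace_iff (F := F),
        IntermediateField.AdjoinSimple.algebraMap_gen]
    · simpa [Subtype.ext_iff] using hy0
  have : Algebra.IsQuadraticExtension (maximalRealSubfield F) (maximalRealSubfield F)⟮y⟯ := by
    apply isQuadraticExtension_adjoin_simple
    · rintro ⟨z, rfl⟩
      obtain ⟨φ⟩ : Nonempty (F →+* ℂ) := inferInstance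
      exact im_ne_zero_of_mem_totallyImaginarySubspace hy hy0 φ
        (Complex.conj_eq_iff_im.mp (z.2 φ))
    · exact ⟨⟨_, sq_mem_maximalRealSubfield hy⟩, rfl⟩
  exact isCMField_iff_numberField_isCMField.mpr (.ofCMExtension (maximalRealSubfield F) _)

variable (F) in
theorem exists_isCMField_iff_totallyImaginarySubspace_ne_bot :
    (∃ K : Subfield F, IsCMField K) ↔ totallyImaginarySubspace F ≠ ⊥ := by
  constructor
  · rintro ⟨K, hK⟩
    have : Algebra.IsAlgebraic ℚ K := .tower_bot ℚ K F
    have : Algebra.IsAlgebraic K F := .tower_top (K := ℚ) K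
    have := isCMField_iff_numberField_isCMField.mp hK
    obtain ⟨x, hx, hx0⟩ := Submodule.exists_mem_ne_zero_of_ne_bot
      (totallyImaginarySubspace_ne_bot_of_isCMField K)
    exact (Submodule.ne_bot_iff _).mpr
      ⟨x, algebraMap_mem_totallyImaginarySubspace_iff.mpr hx, by simpa using hx0⟩
  · intro h
    obtain ⟨y, hy, hy0⟩ := Submodule.exists_mem_ne_zero_of_ne_bot h
    exact ⟨(maximalRealSubfield F)⟮y⟯.toSubfield, isCMField_adjoin_simple hy hy0⟩

end TotallyImaginary

theorem exists_CM_subfield_iff_general (F : Type*) [Field F] [CharZero F]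
    [Algebra.IsAlgebraic ℚ F] :
    ((∃ K : Subfield F, IsCMField K) ↔ totallyImaginarySubspace F ≠ ⊥) ∧
    (totallyImaginarySubspace F ≠ ⊥ ↔
      Module.rank ℚ (maximalRealSubfield F) = Module.rank ℚ (totallyImaginarySubspace F)) :=
  ⟨exists_isCMField_iff_totallyImaginarySubspace_ne_bot F,
    totallyImaginarySubspace_ne_bot_iff_rank_eq F⟩

section NumberField

variable (F : Type*) [Field F] [NumberField F]

theorem rank_Fplus : Module.rank ℚ (Fplus F) = Module.rank ℚ (maximalRealSubfield F) := by
  let e : Fplus F ≃ₗ[ℚ] maximalRealSubfield F :=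
    { Equiv.subtypeEquivRight (fun _ ↦ forall_congr' fun _ ↦ eq_comm) with
      map_add' := fun _ _ ↦ rfl
      map_smul' := fun _ _ ↦ rfl }
  exact e.rank_eq

theorem Fminus_eq_restrictScalars :
    Fminus F = (totallyImaginarySubspace F).restrictScalars ℚ :=
  Submodule.ext fun _ ↦ forall_congr' fun _ ↦ eq_comm.trans neg_eq_iff_eq_neg

theorem Fminus_ne_bot_iff : Fminus F ≠ ⊥ ↔ totallyImaginarySubspace F ≠ ⊥ := by
  rw [Fminus_eq_restrictScalars, ne_eq, Submodule.restrictScalars_eq_bot_iff]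

theorem finrank_Fplus_eq_finrank_Fminus_iff :
    Module.finrank ℚ (Fplus F) = Module.finrank ℚ (Fminus F) ↔
      Module.rank ℚ (maximalRealSubfield F) = Module.rank ℚ (totallyImaginarySubspace F) := by
  rw [← rank_Fplus, ← Nat.cast_inj (R := Cardinal), Module.finrank_eq_rank,
    Module.finrank_eq_rank, Fminus_eq_restrictScalars]
  rfl

end NumberField

/-- `F` admits a CM subfield if and only if `F⁻ ≠ {0}`, and this holds if and
only if `dim_ℚ F⁺ = dim_ℚ F⁻`. -/
theorem exists_CM_subfield_iff (F : Type*) [Field F] [NumberField F] :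
    ((∃ K : Subfield F, IsCMField K) ↔ Fminus F ≠ ⊥) ∧
    (Fminus F ≠ ⊥ ↔ Module.finrank ℚ (Fplus F) = Module.finrank ℚ (Fminus F)) := by
  rw [Fminus_ne_bot_iff, finrank_Fplus_eq_finrank_Fminus_iff]
  exact exists_CM_subfield_iff_general F
end
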